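/- (Southwest Corollary) Let G be a finite simple graph on n vertices and suppose there is no matrix A ∈ S(G) with exactly p positive eigenvalues and exactly q negative eigenvalues, where p + q < n. Then for all integers s, t with 0 ≤ s ≤ p and 0 ≤ t ≤ q, there is no matrix A ∈ S(G) with exactly s positive eigenvalues and exactly t negative eigenvalues. -/

import Mathlib

/-- The number of positive eigenvalues (with multiplicity) of a Hermitian matrix. -/
noncomputable def posEigCount {n : Type*} [Fintype n] [DecidableEq n]
    {A : Matrix n n ℂ} (hA : A.IsHermitian) : ℕ :=
  Fintype.card {i // 0 < hA.eigenvalues i}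

/-- The number of negative eigenvalues (with multiplicity) of a Hermitian matrix. -/
noncomputable def negEigCount {n : Type*} [Fintype n] [DecidableEq n]
    {A : Matrix n n ℂ} (hA : A.IsHermitian) : ℕ :=
  Fintype.card {i // hA.eigenvalues i < 0}

open Matrix in
lemma quad_eq {V : Type*} [Fintype V] [DecidableEq V] {A : Matrix V V ℂ} (hA : A.IsHermitian)
    (x : V → ℂ) : (star x ⬝ᵥ (A *ᵥ x)).re =
      ∑ i, hA.eigenvalues i *
        Complex.normSq ((star (hA.eigenvectorUnitary : Matrix V V ℂ) *ᵥ x) i) := by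
  set U : Matrix V V ℂ := (hA.eigenvectorUnitary : Matrix V V ℂ) with hU
  have h : A = U * diagonal (RCLike.ofReal ∘ hA.eigenvalues) * star U := by
    have := hA.spectral_theorem
    rw [Unitary.conjStarAlgAut_apply] at this
    exact this
  have h2 : star x ⬝ᵥ (A *ᵥ x) = star (star U *ᵥ x) ⬝ᵥ
      (diagonal (RCLike.ofReal ∘ hA.eigenvalues) *ᵥ (star U *ᵥ x)) := by
    conv_lhs => rw [h]
    rw [star_mulVec, ← mulVec_mulVec, ← mulVec_mulVec, dotProduct_mulVec]
    simp [star_eq_conjTranspose]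
  rw [h2, dotProduct, Complex.re_sum]
  refine Finset.sum_congr rfl fun i _ => ?_
  rw [mulVec_diagonal]
  simp [Complex.normSq_apply]
  ring

open Matrix in
lemma count_le {V : Type*} [Fintype V] [DecidableEq V] {A B : Matrix V V ℂ}
    (hA : A.IsHermitian) (hB : B.IsHermitian) (c d : ℝ) {ι : Type*} [Fintype ι]
    (l : (V → ℂ) →ₗ[ℂ] (ι → ℂ))
    (hl : ∀ x, l x = 0 → c * (star x ⬝ᵥ (B *ᵥ x)).re ≤ d * (star x ⬝ᵥ (A *ᵥ x)).re) :
    Fintype.card {i // 0 < c * hB.eigenvalues i} ≤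
      Fintype.card {i // 0 < d * hA.eigenvalues i} + Fintype.card ι := by
  by_contra hcon
  push Not at hcon
  set UA : Matrix V V ℂ := star (hA.eigenvectorUnitary : Matrix V V ℂ) with hUA
  set UB : Matrix V V ℂ := star (hB.eigenvectorUnitary : Matrix V V ℂ) with hUB
  let f1 : (V → ℂ) →ₗ[ℂ] ({i // 0 < d * hA.eigenvalues i} → ℂ) :=
    (LinearMap.funLeft ℂ ℂ Subtype.val).comp UA.mulVecLin
  let f2 : (V → ℂ) →ₗ[ℂ] ({i // ¬ 0 < c * hB.eigenvalues i} → ℂ) :=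
    (LinearMap.funLeft ℂ ℂ Subtype.val).comp UB.mulVecLin
  let f := (f1.prod l).prod f2
  have hcard := Fintype.card_subtype_compl (fun i => 0 < c * hB.eigenvalues i)
  have hle := Fintype.card_subtype_le (fun i => 0 < c * hB.eigenvalues i)
  have hker : LinearMap.ker f ≠ ⊥ := by
    apply LinearMap.ker_ne_bot_of_finrank_lt
    simp only [Module.finrank_prod, Module.finrank_fintype_fun_eq_card]
    omega
  obtain ⟨x, hx, hx0⟩ := (Submodule.ne_bot_iff _).1 hker
  have hx' : (f1 x = 0 ∧ l x = 0) ∧ f2 x = 0 := by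
    have : f x = 0 := hx
    simpa [f, Prod.ext_iff] using this
  obtain ⟨⟨h1, h2⟩, h3⟩ := hx'
  have k := hl x h2
  rw [quad_eq hA, quad_eq hB, ← hUA, ← hUB, Finset.mul_sum, Finset.mul_sum] at k
  have kA : ∑ i, d * (hA.eigenvalues i * Complex.normSq ((UA *ᵥ x) i)) ≤ 0 := by
    refine Finset.sum_nonpos fun i _ => ?_
    by_cases hi : 0 < d * hA.eigenvalues i
    · have : (UA *ᵥ x) i = 0 := congrFun h1 ⟨i, hi⟩
      simp [this]
    · rw [← mul_assoc]
      exact mul_nonpos_of_nonpos_of_nonneg (not_lt.1 hi) (Complex.normSq_nonneg _)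
  have hy : UB *ᵥ x ≠ 0 := by
    intro h
    apply hx0
    have : (hB.eigenvectorUnitary : Matrix V V ℂ) *ᵥ (UB *ᵥ x) = x := by
      rw [mulVec_mulVec, hUB, Unitary.mul_star_self_of_mem hB.eigenvectorUnitary.2, one_mulVec]
    rw [← this, h, mulVec_zero]
  obtain ⟨j, hj⟩ := Function.ne_iff.1 hy
  have hz : ∀ i, ¬ 0 < c * hB.eigenvalues i → (UB *ᵥ x) i = 0 := fun i hi =>
    congrFun h3 ⟨i, hi⟩
  have kB : 0 < ∑ i, c * (hB.eigenvalues i * Complex.normSq ((UB *ᵥ x) i)) := by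
    refine Finset.sum_pos' (fun i _ => ?_) ⟨j, Finset.mem_univ _, ?_⟩
    · by_cases hi : 0 < c * hB.eigenvalues i
      · rw [← mul_assoc]
        exact mul_nonneg hi.le (Complex.normSq_nonneg _)
      · simp [hz i hi]
    · rw [← mul_assoc]
      refine mul_pos ?_ (Complex.normSq_pos.2 hj)
      by_contra hi
      exact hj (hz j hi)
  linarith

lemma rank_count {V : Type*} [Fintype V] [DecidableEq V] {A : Matrix V V ℂ}
    (hA : A.IsHermitian) (c : ℝ) (hc : c ≠ 0) : A.rank =
      Fintype.card {i // 0 < c * hA.eigenvalues i} +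
        Fintype.card {i // 0 < -c * hA.eigenvalues i} := by
  rw [hA.rank_eq_card_non_zero_eigs, ← Fintype.card_subtype_or_disjoint]
  · refine Fintype.card_congr (Equiv.subtypeEquivRight fun i => ?_)
    have h : hA.eigenvalues i ≠ 0 ↔ c * hA.eigenvalues i ≠ 0 := by simp [hc]
    rw [neg_mul, neg_pos, h, ne_iff_lt_or_gt, or_comm]
  · rw [Pi.disjoint_iff]
    intro i
    rw [Prop.disjoint_iff]
    rintro ⟨h1, h2⟩
    linarith

open Matrix in
lemma step {V : Type*} [Fintype V] [DecidableEq V] {A : Matrix V V ℂ}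
    (hA : A.IsHermitian) (c : ℝ) (hc : c ≠ 0) (hr : A.rank < Fintype.card V) :
    ∃ B : Matrix V V ℂ, ∃ hB : B.IsHermitian, (∀ i j, i ≠ j → B i j = A i j) ∧
      Fintype.card {i // 0 < c * hB.eigenvalues i} =
        Fintype.card {i // 0 < c * hA.eigenvalues i} + 1 ∧
      Fintype.card {i // 0 < -c * hB.eigenvalues i} =
        Fintype.card {i // 0 < -c * hA.eigenvalues i} := by
  have hnull := LinearMap.finrank_range_add_finrank_ker A.mulVecLin
  rw [Module.finrank_fintype_fun_eq_card] at hnull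
  have hr' : A.rank = Module.finrank ℂ (LinearMap.range A.mulVecLin) := rfl
  have hker : LinearMap.ker A.mulVecLin ≠ ⊥ := by
    intro h
    rw [h, finrank_bot] at hnull
    omega
  obtain ⟨v, hv, hv0⟩ := (Submodule.ne_bot_iff _).1 hker
  have hv : A *ᵥ v = 0 := hv
  obtain ⟨k, hk⟩ := Function.ne_iff.1 hv0
  set B : Matrix V V ℂ := A + diagonal (Pi.single k (c : ℂ)) with hBdef
  have hB : B.IsHermitian := by
    refine hA.add (isHermitian_diagonal_of_self_adjoint _ ?_)
    ext i
    by_cases hi : i = k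
    · subst hi; simp
    · simp [hi]
  have hmul : ∀ x, B *ᵥ x = A *ᵥ x + Pi.single k (c * x k) := by
    intro x
    rw [hBdef, add_mulVec]
    congr 1
    ext i
    rw [mulVec_diagonal]
    by_cases hi : i = k
    · subst hi; simp
    · simp [hi]
  have hquad : ∀ x, (star x ⬝ᵥ (B *ᵥ x)).re =
      (star x ⬝ᵥ (A *ᵥ x)).re + c * Complex.normSq (x k) := by
    intro x
    rw [hmul, dotProduct_add, dotProduct_single]
    simp [Complex.normSq_apply]
    ring
  have e1 := count_le hA hB c c (ι := Unit) (LinearMap.funLeft ℂ ℂ (fun _ => k)) (by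
    intro x hx
    have hx : x k = 0 := congrFun hx ()
    rw [hquad, hx]
    simp)
  have e2 := count_le hA hB (-c) (-c) (ι := Empty) 0 (by
    intro x _
    rw [hquad]
    nlinarith [mul_nonneg (mul_self_nonneg c) (Complex.normSq_nonneg (x k))])
  have hBx : ∀ x, B *ᵥ x = 0 → A *ᵥ x = 0 ∧ x k = 0 := by
    intro x hx
    have h1 : star v ⬝ᵥ (B *ᵥ x) = 0 := by rw [hx, dotProduct_zero]
    have h2 : star v ⬝ᵥ (A *ᵥ x) = 0 := by
      rw [dotProduct_mulVec, ← hA.eq, ← star_mulVec, hv]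
      simp
    rw [hmul, dotProduct_add, h2, dotProduct_single] at h1
    have hxk : x k = 0 := by
      have hk' : v k ≠ 0 := hk
      simpa [hc, hk'] using h1
    refine ⟨?_, hxk⟩
    have := hmul x
    rw [hx, hxk] at this
    simpa using this.symm
  have hlt : LinearMap.ker B.mulVecLin < LinearMap.ker A.mulVecLin := by
    refine lt_of_le_of_ne (fun x hx => (hBx x hx).1) fun h => ?_
    have : v ∈ LinearMap.ker B.mulVecLin := by rw [h]; exact hv
    exact hk (hBx v this).2
  have hfr := Submodule.finrank_lt_finrank_of_lt hlt
  have hnullB := LinearMap.finrank_range_add_finrank_ker B.mulVecLin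
  rw [Module.finrank_fintype_fun_eq_card] at hnullB
  have hrB : B.rank = Module.finrank ℂ (LinearMap.range B.mulVecLin) := rfl
  have rA := rank_count hA c hc
  have rB := rank_count hB c hc
  simp only [Fintype.card_unit, Fintype.card_empty, add_zero] at e1 e2
  refine ⟨B, hB, fun i j hij => by simp [hBdef, hij], by omega, by omega⟩

/-- `(p, q)` lies in the inertia set of `G`. -/
def InInertia {V : Type*} [Fintype V] [DecidableEq V] (G : SimpleGraph V) (p q : ℕ) : Prop :=
  ∃ A : Matrix V V ℂ, ∃ hA : A.IsHermitian,
      (∀ i j : V, i ≠ j → (A i j ≠ 0 ↔ G.Adj i j)) ∧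
      posEigCount hA = p ∧ negEigCount hA = q

lemma pos_count {V : Type*} [Fintype V] [DecidableEq V] {A : Matrix V V ℂ}
    (hA : A.IsHermitian) : posEigCount hA = Fintype.card {i // 0 < (1 : ℝ) * hA.eigenvalues i} :=
  Fintype.card_congr (Equiv.subtypeEquivRight fun i => by simp)

lemma neg_count {V : Type*} [Fintype V] [DecidableEq V] {A : Matrix V V ℂ}
    (hA : A.IsHermitian) : negEigCount hA = Fintype.card {i // 0 < (-1 : ℝ) * hA.eigenvalues i} :=
  Fintype.card_congr (Equiv.subtypeEquivRight fun i => by simp)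

lemma pos_count' {V : Type*} [Fintype V] [DecidableEq V] {A : Matrix V V ℂ}
    (hA : A.IsHermitian) :
    posEigCount hA = Fintype.card {i // 0 < -(-1 : ℝ) * hA.eigenvalues i} :=
  Fintype.card_congr (Equiv.subtypeEquivRight fun i => by simp)

lemma InInertia.east {V : Type*} [Fintype V] [DecidableEq V] {G : SimpleGraph V} {p q : ℕ}
    (h : InInertia G p q) (hpq : p + q < Fintype.card V) : InInertia G (p + 1) q := by
  obtain ⟨A, hA, hG, hp, hq⟩ := h
  rw [pos_count] at hp
  rw [neg_count] at hq
  obtain ⟨B, hB, hAB, h1, h2⟩ := step hA 1 one_ne_zero (by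
    rw [rank_count hA 1 one_ne_zero]; omega)
  refine ⟨B, hB, fun i j hij => by rw [hAB i j hij]; exact hG i j hij, ?_, ?_⟩
  · rw [pos_count]; omega
  · rw [neg_count]; omega

lemma InInertia.north {V : Type*} [Fintype V] [DecidableEq V] {G : SimpleGraph V} {p q : ℕ}
    (h : InInertia G p q) (hpq : p + q < Fintype.card V) : InInertia G p (q + 1) := by
  obtain ⟨A, hA, hG, hp, hq⟩ := h
  rw [pos_count'] at hp
  rw [neg_count] at hq
  have h0 : (-1 : ℝ) ≠ 0 := by norm_num
  obtain ⟨B, hB, hAB, h1, h2⟩ := step hA (-1) h0 (by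
    rw [rank_count hA (-1) h0]; omega)
  refine ⟨B, hB, fun i j hij => by rw [hAB i j hij]; exact hG i j hij, ?_, ?_⟩
  · rw [pos_count']; omega
  · rw [neg_count]; omega

/-- Southwest Corollary: if `(p, q)` with `p + q < n` is not in the inertia set of
`G`, then neither is `(s, t)` for any `0 ≤ s ≤ p` and `0 ≤ t ≤ q`. -/
theorem southwest_corollary
    {V : Type*} [Fintype V] [DecidableEq V] (G : SimpleGraph V)
    (p q : ℕ) (hpq : p + q < Fintype.card V)
    (hnotin : ¬ ∃ A : Matrix V V ℂ, ∃ hA : A.IsHermitian,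
      (∀ i j : V, i ≠ j → (A i j ≠ 0 ↔ G.Adj i j)) ∧
      posEigCount hA = p ∧ negEigCount hA = q)
    (s t : ℕ) (hs : s ≤ p) (ht : t ≤ q) :
    ¬ ∃ A : Matrix V V ℂ, ∃ hA : A.IsHermitian,
      (∀ i j : V, i ≠ j → (A i j ≠ 0 ↔ G.Adj i j)) ∧
      posEigCount hA = s ∧ negEigCount hA = t := by
  intro h
  have h : InInertia G s t := h
  apply hnotin
  have h1 : ∀ a, s + a ≤ p → InInertia G (s + a) t := by
    intro a
    induction a with
    | zero => exact fun _ => h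
    | succ a ih => exact fun ha => (ih (by omega)).east (by omega)
  have h2 : ∀ b, t + b ≤ q → InInertia G p (t + b) := by
    intro b
    induction b with
    | zero =>
      intro _
      have := h1 (p - s) (by omega)
      rwa [Nat.add_sub_cancel' hs] at this
    | succ b ih => exact fun hb => (ih (by omega)).north (by omega)
  have := h2 (q - t) (by omega)
  rwa [Nat.add_sub_cancel' ht] at this
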